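/- Fix constants h, ε, η, λ, M > 0 and d ∈ ℕ. Let g : ℝ × ℝ^d → ℝ^d be continuous with ‖g(t,x)‖ ≤ M for all (t,x) and ‖g(t,x) − g(t,y)‖ ≤ λ·‖x − y‖ for all t, x, y. Define the kernel-averaged vector field g_η(t,x) = (1/η)·∫₀^η ρ(s/η)·g(t+s, x) ds. Let v, v̄ : ℝ → ℝ^d be differentiable with v'(t) = h·ε·g(t, v(t)) and v̄'(t) = h·ε·g_η(t, v̄(t)) for all t ≥ 0, and with v(0) = v̄(0). Then for every t with 0 ≤ t ≤ 1/ε, ‖v(t) − v̄(t)‖ ≤ C₀·(2 + λ·h)·M·η·h·ε·exp(h·ε·λ·t). -/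

import Mathlib

/-!
Write `c = h * ε` and let `k s = ρ (s / η) / η` be the rescaled kernel, a probability density on
`[0, η]` with first moment `η * C₀`. Integrating both equations, `v t - vb t` is `c` times the sum of
`∫ (g (τ, v τ) - g (τ, vb τ))`, bounded by `lam * ∫ ‖v - vb‖`, and of the averaging error
`∫ (g (τ, vb τ) - ∫ k s • g (τ + s, vb τ))` along `vb`.

By Fubini the averaging error is the `k`-average over `s` of
`∫ (g (τ, vb τ) - g (τ + s, vb τ))`. Up to replacing `vb τ` by `vb (τ + s)`, which costs
`lam * (c * M * s)` per unit time because `vb` is `c * M`-Lipschitz, this is the difference of an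
integral and its translate, so only two end intervals of length `s` survive, each contributing at
most `M * s` (`norm_integral_sub_shift_le`). Averaging over `s` gives
`(2 * M + lam * c * M * t) * (η * C₀)` (`norm_integral_sub_average_le`), at most
`(2 + lam * h) * M * η * C₀` since `ε * t ≤ 1`. The integral form of Grönwall's inequality
(`le_mul_exp_of_le_add_integral`) concludes.
-/

open intervalIntegral MeasureTheory

/-- Shifting time by `s` inside `G (·, w ·)` costs the two end intervals of length `s` (at most
`2 * M * s`) plus the drift of `w` over a time `s`, integrated over `[0, t]`. -/
lemma norm_integral_sub_shift_le {E : Type*} [NormedAddCommGroup E] [NormedSpace ℝ E]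
    {G : ℝ × E → E} (hG : Continuous G) {M lam c : ℝ}
    (hGM : ∀ p, ‖G p‖ ≤ M) (hlam : 0 ≤ lam)
    (hGLip : ∀ t x y, ‖G (t, x) - G (t, y)‖ ≤ lam * ‖x - y‖)
    {w : ℝ → E} (hw : Continuous w)
    (hwLip : ∀ a b, 0 ≤ a → a ≤ b → ‖w b - w a‖ ≤ c * (b - a))
    {s t : ℝ} (hs : 0 ≤ s) (ht : 0 ≤ t) :
    ‖∫ τ in (0:ℝ)..t, (G (τ, w τ) - G (τ + s, w τ))‖ ≤ (2 * M + lam * c * t) * s := by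
  set f : ℝ → E := fun τ => G (τ, w τ) with hf
  have hfc : Continuous f := by fun_prop
  have hfi : ∀ a b, IntervalIntegrable f volume a b := fun a b => hfc.intervalIntegrable a b
  have hsplit : (∫ τ in (0:ℝ)..t, (G (τ, w τ) - G (τ + s, w τ)))
      = ((∫ τ in (0:ℝ)..s, f τ) - ∫ τ in t..(t + s), f τ)
        + ∫ τ in (0:ℝ)..t, (G (τ + s, w (τ + s)) - G (τ + s, w τ)) := by
    have h1 : (∫ τ in (0:ℝ)..t, f (τ + s)) = ∫ τ in s..(t + s), f τ := by
      simp [integral_comp_add_right]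
    have h2 : (∫ τ in (0:ℝ)..s, f τ) - ∫ τ in t..(t + s), f τ
        = (∫ τ in (0:ℝ)..t, f τ) - ∫ τ in s..(t + s), f τ := by
      rw [integral_interval_sub_interval_comm (hfi _ _) (hfi _ _) (hfi _ _)]
    rw [h2, ← h1, ← intervalIntegral.integral_sub (hfi _ _), ← intervalIntegral.integral_add]
    · simp [hf]
    all_goals apply Continuous.intervalIntegrable; fun_prop
  have hA : ‖∫ τ in (0:ℝ)..s, f τ‖ ≤ M * s := by
    simpa [abs_of_nonneg hs] using
      norm_integral_le_of_norm_le_const (a := 0) (b := s) (f := f) (fun x _ => hGM _)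
  have hB : ‖∫ τ in t..(t + s), f τ‖ ≤ M * s := by
    simpa [abs_of_nonneg hs] using
      norm_integral_le_of_norm_le_const (a := t) (b := t + s) (f := f) (fun x _ => hGM _)
  have hC : ‖∫ τ in (0:ℝ)..t, (G (τ + s, w (τ + s)) - G (τ + s, w τ))‖
      ≤ lam * (c * s) * t := by
    have := norm_integral_le_of_norm_le_const (a := 0) (b := t) (C := lam * (c * s))
      (f := fun τ => G (τ + s, w (τ + s)) - G (τ + s, w τ)) (fun x hx => by
        rw [Set.uIoc_of_le ht] at hx
        refine (hGLip _ _ _).trans (mul_le_mul_of_nonneg_left ?_ hlam)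
        simpa using hwLip x (x + s) hx.1.le (by linarith))
    simpa [abs_of_nonneg ht] using this
  rw [hsplit]
  refine (norm_add_le _ _).trans ?_
  have := norm_sub_le (∫ τ in (0:ℝ)..s, f τ) (∫ τ in t..(t + s), f τ)
  linarith

/-- Averaging over a probability density `k` on `[0, η]` replaces the shift `s` of
`norm_integral_sub_shift_le` by the first moment of `k` (Fubini). -/
lemma norm_integral_sub_average_le {E : Type*} [NormedAddCommGroup E] [NormedSpace ℝ E]
    [CompleteSpace E]
    {G : ℝ × E → E} (hG : Continuous G) {M lam c : ℝ}
    (hGM : ∀ p, ‖G p‖ ≤ M) (hlam : 0 ≤ lam)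
    (hGLip : ∀ t x y, ‖G (t, x) - G (t, y)‖ ≤ lam * ‖x - y‖)
    {w : ℝ → E} (hw : Continuous w)
    (hwLip : ∀ a b, 0 ≤ a → a ≤ b → ‖w b - w a‖ ≤ c * (b - a))
    {k : ℝ → ℝ} (hk : Continuous k) (hk0 : ∀ s, 0 ≤ k s) {η : ℝ} (hη : 0 ≤ η)
    (hk1 : (∫ s in (0:ℝ)..η, k s) = 1) {t : ℝ} (ht : 0 ≤ t) :
    ‖∫ τ in (0:ℝ)..t, (G (τ, w τ) - ∫ s in (0:ℝ)..η, k s • G (τ + s, w τ))‖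
      ≤ (2 * M + lam * c * t) * ∫ s in (0:ℝ)..η, k s * s := by
  have hinner : ∀ τ, G (τ, w τ) - (∫ s in (0:ℝ)..η, k s • G (τ + s, w τ))
      = ∫ s in (0:ℝ)..η, k s • (G (τ, w τ) - G (τ + s, w τ)) := by
    intro τ
    simp_rw [smul_sub]
    rw [intervalIntegral.integral_sub, intervalIntegral.integral_smul_const, hk1, one_smul]
    all_goals apply Continuous.intervalIntegrable; fun_prop
  simp_rw [hinner]
  have hswap : (∫ τ in (0:ℝ)..t, ∫ s in (0:ℝ)..η, k s • (G (τ, w τ) - G (τ + s, w τ)))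
      = ∫ s in (0:ℝ)..η, k s • ∫ τ in (0:ℝ)..t, (G (τ, w τ) - G (τ + s, w τ)) := by
    rw [intervalIntegral_intervalIntegral_swap]
    · simp_rw [intervalIntegral.integral_smul]
    · have hc : Continuous (Function.uncurry
          fun τ s : ℝ => k s • (G (τ, w τ) - G (τ + s, w τ))) := by
        unfold Function.uncurry; fun_prop
      exact (hc.continuousOn.integrableOn_compact
        (isCompact_uIcc.prod isCompact_uIcc)).mono_set
          (Set.prod_mono Set.uIoc_subset_uIcc Set.uIoc_subset_uIcc)
  rw [hswap, ← intervalIntegral.integral_const_mul]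
  refine intervalIntegral.norm_integral_le_of_norm_le hη ?_ ?_
  · refine Filter.Eventually.of_forall fun s hs => ?_
    rw [norm_smul, Real.norm_of_nonneg (hk0 s)]
    have := mul_le_mul_of_nonneg_left
      (norm_integral_sub_shift_le hG hGM hlam hGLip hw hwLip hs.1.le ht) (hk0 s)
    linarith
  · apply Continuous.intervalIntegrable; fun_prop

/-- Grönwall's inequality in integral form. -/
lemma le_mul_exp_of_le_add_integral {φ : ℝ → ℝ} (hφ : Continuous φ) (hφ0 : ∀ x, 0 ≤ φ x)
    {K L T : ℝ} (hK : 0 ≤ K) (hL : 0 ≤ L) (hT : 0 ≤ T)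
    (hle : ∀ t ∈ Set.Icc 0 T, φ t ≤ K + L * ∫ τ in (0:ℝ)..t, φ τ) :
    φ T ≤ K * Real.exp (L * T) := by
  set F : ℝ → ℝ := fun t => K + L * ∫ τ in (0:ℝ)..t, φ τ with hF
  have hFd : ∀ t, HasDerivAt F (L * φ t) t := fun t =>
    ((hφ.integral_hasStrictDerivAt 0 t).hasDerivAt.const_mul L).const_add K
  have := norm_le_gronwallBound_of_norm_deriv_right_le (f := F) (f' := fun t => L * φ t)
    (δ := K) (K := L) (ε := 0) (a := 0) (b := T)
    (fun t _ => (hFd t).continuousAt.continuousWithinAt)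
    (fun t _ => (hFd t).hasDerivWithinAt) (by simp [hF, abs_of_nonneg hK])
    (fun t ht => by
      rw [add_zero, norm_mul, Real.norm_of_nonneg hL, Real.norm_of_nonneg (hφ0 t)]
      exact mul_le_mul_of_nonneg_left
        ((hle t ⟨ht.1, ht.2.le⟩).trans (le_abs_self _)) hL) T ⟨hT, le_rfl⟩
  rw [gronwallBound_ε0, sub_zero] at this
  exact (hle T ⟨hT, le_rfl⟩).trans ((le_abs_self _).trans this)

/-- Lemma 4.1 of the paper (proved in the appendix): the difference between the exact
solution of the highly oscillatory ODE `v' = h·ε·g(t,v)` and the solution of the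
kernel-averaged ODE `v̄' = h·ε·g_η(t,v̄)` with the same initial condition satisfies
`‖v(t) − v̄(t)‖ ≤ C₀·(2+λ·h)·M·η·h·ε·exp(h·ε·λ·t)` on `0 ≤ t ≤ 1/ε`. -/
theorem averaging_error_bound
    (ρ : ℝ → ℝ) (hρc : Continuous ρ) (hρ0 : ∀ s, 0 ≤ ρ s)
    (hρsupp : ∀ s, s ∉ Set.Icc (0:ℝ) 1 → ρ s = 0)
    (hρint : (∫ s in (0:ℝ)..1, ρ s) = 1)
    (C₀ : ℝ) (hC₀ : C₀ = ∫ s in (0:ℝ)..1, ρ s * s)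
    (h ε η lam M : ℝ) (hh : 0 < h) (hε : 0 < ε) (hη : 0 < η)
    (hlam : 0 < lam) (hM : 0 < M)
    (d : ℕ)
    (g : ℝ × EuclideanSpace ℝ (Fin d) → EuclideanSpace ℝ (Fin d))
    (hgc : Continuous g)
    (hgM : ∀ p, ‖g p‖ ≤ M)
    (hgLip : ∀ t x y, ‖g (t, x) - g (t, y)‖ ≤ lam * ‖x - y‖)
    (v vb : ℝ → EuclideanSpace ℝ (Fin d))
    (hv : ∀ t, 0 ≤ t → HasDerivAt v ((h * ε) • g (t, v t)) t)
    (hvb : ∀ t, 0 ≤ t → HasDerivAt vb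
      ((h * ε) • ((1/η) • ∫ s in (0:ℝ)..η, ρ (s/η) • g (t + s, vb t))) t)
    (hv0 : v 0 = vb 0)
    (t : ℝ) (ht0 : 0 ≤ t) (ht1 : t ≤ 1 / ε) :
    ‖v t - vb t‖ ≤ C₀ * (2 + lam * h) * M * η * h * ε * Real.exp (h * ε * lam * t) := by
  set k : ℝ → ℝ := fun s => 1 / η * ρ (s / η) with hk
  have hkc : Continuous k := by fun_prop
  have hk0 : ∀ s, 0 ≤ k s := fun s => mul_nonneg (by positivity) (hρ0 _)
  have hk1 : (∫ s in (0:ℝ)..η, k s) = 1 := by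
    simp only [hk]
    rw [intervalIntegral.integral_const_mul, integral_comp_div _ hη.ne']
    simp [hρint, hη.ne']
  have hkm : (∫ s in (0:ℝ)..η, k s * s) = η * C₀ := by
    have : ∀ s, k s * s = (fun x => ρ x * x) (s / η) := fun s => by
      simp only [hk]; field_simp
    simp_rw [this]
    rw [integral_comp_div (fun x => ρ x * x) hη.ne']
    simp [hC₀, hη.ne']
  have hC₀nn : 0 ≤ C₀ := by
    rw [hC₀]
    exact integral_nonneg zero_le_one fun s hs => mul_nonneg (hρ0 s) hs.1
  have hvb' : ∀ t, 0 ≤ t → HasDerivAt vb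
      ((h * ε) • ∫ s in (0:ℝ)..η, k s • g (t + s, vb t)) t := by
    intro t ht
    have := hvb t ht
    rw [← intervalIntegral.integral_smul] at this
    simpa only [smul_smul] using this
  -- The ODEs constrain `v` and `vb` only on `[0, ∞)`; freezing them at time `0` on the left
  -- gives globally continuous functions.
  set u : ℝ → EuclideanSpace ℝ (Fin d) := fun τ => v (max τ 0) with hu
  set w : ℝ → EuclideanSpace ℝ (Fin d) := fun τ => vb (max τ 0) with hw
  have huc : Continuous u := continuous_iff_continuousAt.2 fun τ =>
    ContinuousAt.comp (f := fun τ : ℝ => max τ 0) (hv _ (le_max_right _ _)).continuousAt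
      (by fun_prop)
  have hwc : Continuous w := continuous_iff_continuousAt.2 fun τ =>
    ContinuousAt.comp (f := fun τ : ℝ => max τ 0) (hvb _ (le_max_right _ _)).continuousAt
      (by fun_prop)
  have hu_eq : ∀ τ, 0 ≤ τ → u τ = v τ := fun τ hτ => by simp [hu, max_eq_left hτ]
  have hw_eq : ∀ τ, 0 ≤ τ → w τ = vb τ := fun τ hτ => by simp [hw, max_eq_left hτ]
  have hgη : ∀ τ x, ‖∫ s in (0:ℝ)..η, k s • g (τ + s, x)‖ ≤ M := by
    intro τ x
    have : ‖∫ s in (0:ℝ)..η, k s • g (τ + s, x)‖ ≤ ∫ s in (0:ℝ)..η, k s * M := by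
      refine intervalIntegral.norm_integral_le_of_norm_le hη.le
        (Filter.Eventually.of_forall fun s _ => ?_)
        ((hkc.mul continuous_const).intervalIntegrable _ _)
      rw [norm_smul, Real.norm_of_nonneg (hk0 s)]
      exact mul_le_mul_of_nonneg_left (hgM _) (hk0 s)
    rwa [intervalIntegral.integral_mul_const, hk1, one_mul] at this
  have hwLip : ∀ a b, 0 ≤ a → a ≤ b → ‖w b - w a‖ ≤ (h * ε * M) * (b - a) := by
    intro a b ha hab
    rw [hw_eq a ha, hw_eq b (ha.trans hab)]
    have := (convex_Ici (0:ℝ)).norm_image_sub_le_of_norm_hasDerivWithin_le (f := vb)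
      (C := h * ε * M) (fun x hx => (hvb' x hx).hasDerivWithinAt)
      (fun x _ => by
        rw [norm_smul, Real.norm_of_nonneg (by positivity)]
        exact mul_le_mul_of_nonneg_left (hgη _ _) (by positivity))
      (Set.mem_Ici.2 ha) (Set.mem_Ici.2 (ha.trans hab))
    rwa [Real.norm_of_nonneg (sub_nonneg.2 hab)] at this
  have hAc : Continuous fun τ => ∫ s in (0:ℝ)..η, k s • g (τ + s, w τ) :=
    continuous_parametric_intervalIntegral_of_continuous' (by unfold Function.uncurry; fun_prop) _ _
  have hgu : Continuous fun τ => g (τ, u τ) := by fun_prop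
  have hgw : Continuous fun τ => g (τ, w τ) := by fun_prop
  have hmain := le_mul_exp_of_le_add_integral (φ := fun τ => ‖u τ - w τ‖)
    (K := C₀ * (2 + lam * h) * M * η * h * ε) (L := h * ε * lam) (T := t)
    (by fun_prop) (fun _ => norm_nonneg _) (by positivity) (by positivity) ht0 ?_
  · simpa only [hu_eq t ht0, hw_eq t ht0] using hmain
  intro r hr
  have hεr : ε * r ≤ 1 := by
    have := hr.2.trans ht1
    rw [le_div_iff₀ hε] at this
    linarith
  -- Splitting of the integrated error into a Lipschitz part and an averaging part.
  have hdiff : u r - w r = (h * ε) • ((∫ τ in (0:ℝ)..r, (g (τ, u τ) - g (τ, w τ)))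
      + ∫ τ in (0:ℝ)..r, (g (τ, w τ) - ∫ s in (0:ℝ)..η, k s • g (τ + s, w τ))) := by
    have hgd : Continuous fun τ => g (τ, u τ) - g (τ, w τ) := hgu.sub hgw
    have hgA : Continuous fun τ => g (τ, w τ) - ∫ s in (0:ℝ)..η, k s • g (τ + s, w τ) :=
      hgw.sub hAc
    rw [← intervalIntegral.integral_add (hgd.intervalIntegrable _ _)
      (hgA.intervalIntegrable _ _), ← intervalIntegral.integral_smul]
    have hftc := integral_eq_sub_of_hasDerivAt (a := 0) (b := r) (f := fun τ => v τ - vb τ)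
      (f' := fun τ => (h * ε) • (g (τ, u τ) - g (τ, w τ)
        + (g (τ, w τ) - ∫ s in (0:ℝ)..η, k s • g (τ + s, w τ))))
      (fun τ hτ => by
        rw [Set.uIcc_of_le hr.1] at hτ
        have := (hv τ hτ.1).sub (hvb' τ hτ.1)
        rw [sub_add_sub_cancel, smul_sub, hu_eq τ hτ.1, hw_eq τ hτ.1]
        exact this)
      (((hgd.add hgA).const_smul (h * ε)).intervalIntegrable _ _)
    rw [hftc, hv0, sub_self, sub_zero, hu_eq r hr.1, hw_eq r hr.1]
  have h1 : ‖∫ τ in (0:ℝ)..r, (g (τ, u τ) - g (τ, w τ))‖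
      ≤ lam * ∫ τ in (0:ℝ)..r, ‖u τ - w τ‖ := by
    rw [← intervalIntegral.integral_const_mul]
    refine intervalIntegral.norm_integral_le_of_norm_le hr.1
      (Filter.Eventually.of_forall fun s _ => hgLip _ _ _) ?_
    apply Continuous.intervalIntegrable; fun_prop
  have h2 := norm_integral_sub_average_le hgc hgM hlam.le hgLip hwc hwLip hkc hk0 hη.le hk1 hr.1
  rw [hkm] at h2
  -- This is where `t ≤ 1 / ε` enters: the drift term `lam * h * ε * M * r` is at most `lam * h * M`.
  have h3 : (2 * M + lam * (h * ε * M) * r) * (η * C₀) ≤ ((2 + lam * h) * M) * (η * C₀) := by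
    refine mul_le_mul_of_nonneg_right ?_ (by positivity)
    have := mul_le_mul_of_nonneg_left hεr (by positivity : 0 ≤ lam * h * M)
    linarith
  have h4 := mul_le_mul_of_nonneg_left
    ((norm_add_le _ _).trans (add_le_add h1 (h2.trans h3))) (by positivity : 0 ≤ h * ε)
  rw [hdiff, norm_smul, Real.norm_of_nonneg (by positivity : 0 ≤ h * ε)]
  linarith
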